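/- Let φ be a holomorphic self-map of the unit disc 𝔻. Then ℳ(φ) = 𝒟 — that is, the weighted composition operator W_{u,φ} is bounded on 𝒟 for every u ∈ 𝒟 — if and only if both (1) ‖φ‖_∞ := sup_{z∈𝔻} |φ(z)| < 1, and (2) φ is a multiplier of 𝒟. -/

import Mathlib

open Complex MeasureTheory Metric Set Filter

noncomputable section

/-- The open unit disc in the complex plane. -/
def unitDisc : Set ℂ := Metric.ball 0 1

/-- The square of the Dirichlet norm:
`‖f‖²_𝒟 = |f(0)|² + ∫_𝔻 |f′(z)|² dA(z)`, with `A` normalized area measure. -/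
def dirNormSq (f : ℂ → ℂ) : ℝ :=
  ‖f 0‖ ^ 2 + (1 / Real.pi) * ∫ z in unitDisc, ‖deriv f z‖ ^ 2

/-- Membership in the Dirichlet space `𝒟`: `f` is holomorphic on `𝔻` and
`|f′|²` is integrable over `𝔻`. -/
def MemDirichlet (f : ℂ → ℂ) : Prop :=
  DifferentiableOn ℂ f unitDisc ∧
    IntegrableOn (fun z : ℂ => ‖deriv f z‖ ^ 2) unitDisc

/-- The weighted composition operator `W_{u,φ} : f ↦ u·(f∘φ)` is bounded
on the Dirichlet space: there is a constant `C` with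
`‖u·(f∘φ)‖²_𝒟 ≤ C ‖f‖²_𝒟` (and `u·(f∘φ) ∈ 𝒟`) for all `f ∈ 𝒟`. -/
def WCOBounded (u φ : ℂ → ℂ) : Prop :=
  ∃ C : ℝ, 0 ≤ C ∧ ∀ f : ℂ → ℂ, MemDirichlet f →
    MemDirichlet (fun z => u z * f (φ z)) ∧
      dirNormSq (fun z => u z * f (φ z)) ≤ C * dirNormSq f

/-! If `‖φ‖ ≤ r < 1` on the disc, then `f ∘ φ` and `f' ∘ φ` are bounded by a multiple of the
Dirichlet norm of `f`. Together with `(u (f ∘ φ))' = u' (f ∘ φ) + ((φ u)' - φ u') (f' ∘ φ)` this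
gives the boundedness of `W_{u,φ}` as soon as `φ u` lies in the Dirichlet space.

Conversely, let `δ_z` be the evaluation at `z`. Boundedness of `W_{u,φ}` gives
`|u(z)| ‖δ_{φ(z)}‖ ≤ C_u ‖δ_z‖`, so that the functionals `(‖δ_{φ(z)}‖ / ‖δ_z‖) • δ_z` are pointwise
bounded. By the uniform boundedness principle the norms `‖δ_{φ(z)}‖` are bounded. On the other hand
`‖δ_w‖ → ∞` as `|w| → 1`: the univalent function `z ↦ log (1 - conj w * z)` maps the disc into a
rectangle of area `π (log 2 - log (1 - |w|))`, which bounds its squared norm, while its value at `w`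
grows like `-log (1 - |w|)`. Finally, `φ u = W_{u,φ} z` shows that `φ` is a multiplier.
-/

open scoped ENNReal Topology ComplexConjugate

section PlanarIntegrals

variable {E : Type*} [NormedAddCommGroup E] [NormedSpace ℂ E]

lemma setLIntegral_ball_eq_lintegral_circleMap {f : ℂ → ℝ≥0∞} (hf : Measurable f) (c : ℂ) (R : ℝ) :
    ∫⁻ w in ball c R, f w = ∫⁻ r in Ioo 0 R, ENNReal.ofReal r *
      ∫⁻ θ in Ioo (-Real.pi) Real.pi, f (circleMap c r θ) := by
  have hsymm : ∀ p : ℝ × ℝ, c + Complex.polarCoord.symm p = circleMap c p.1 p.2 := fun p ↦ by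
    simp [Complex.polarCoord_symm_apply, circleMap, Complex.exp_mul_I]
  have hmeas : Measurable fun p : ℝ × ℝ ↦ circleMap c p.1 p.2 := by
    unfold circleMap; fun_prop
  have hind : ∀ r ∈ Ioi (0 : ℝ), ∀ θ, (ball c R).indicator f (circleMap c r θ) =
      (Iio R).indicator (fun r ↦ f (circleMap c r θ)) r := fun r (hr : 0 < r) θ ↦ by
    have hmem : circleMap c r θ ∈ ball c R ↔ r ∈ Iio R := by
      simp [circleMap, abs_of_pos hr]
    simp only [indicator, hmem]
  calc ∫⁻ w in ball c R, f w
      = ∫⁻ w, (ball c R).indicator f (c + w) := by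
        rw [lintegral_add_left_eq_self, lintegral_indicator measurableSet_ball]
    _ = ∫⁻ p in Ioi (0 : ℝ) ×ˢ Ioo (-Real.pi) Real.pi,
          ENNReal.ofReal p.1 * (ball c R).indicator f (circleMap c p.1 p.2) := by
        simp only [← Complex.lintegral_comp_polarCoord_symm, hsymm, smul_eq_mul]
        rfl
    _ = ∫⁻ r in Ioi 0, ∫⁻ θ in Ioo (-Real.pi) Real.pi,
          ENNReal.ofReal r * (ball c R).indicator f (circleMap c r θ) := by
        rw [Measure.volume_eq_prod, setLIntegral_prod]
        have := (hf.indicator (measurableSet_ball (x := c) (ε := R))).comp hmeas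
        exact Measurable.aemeasurable (by fun_prop)
    _ = ∫⁻ r in Ioi 0, (Iio R).indicator (fun r ↦ ENNReal.ofReal r *
          ∫⁻ θ in Ioo (-Real.pi) Real.pi, f (circleMap c r θ)) r := by
        refine setLIntegral_congr_fun measurableSet_Ioi fun r hr ↦ ?_
        simp only [hind r hr]
        by_cases hrR : r ∈ Iio R
        · simp only [hrR, indicator_of_mem]
          exact lintegral_const_mul' _ _ ENNReal.ofReal_ne_top
        · simp only [hrR, not_false_eq_true, indicator_of_notMem, mul_zero, lintegral_zero]
    _ = _ := by
        rw [setLIntegral_indicator measurableSet_Iio, inter_comm, Ioi_inter_Iio]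

lemma enorm_center_le_lintegral_circleMap [CompleteSpace E] {F : ℂ → E} {c : ℂ} {r : ℝ}
    (hF : DiffContOnCl ℂ F (ball c |r|)) :
    ENNReal.ofReal (2 * Real.pi) * ‖F c‖ₑ ≤
      ∫⁻ θ in Ioo (-Real.pi) Real.pi, ‖F (circleMap c r θ)‖ₑ := by
  have hmean : ∫ θ in Ioo (-Real.pi) Real.pi, F (circleMap c r θ) = (2 * Real.pi) • F c := by
    rw [← hF.circleAverage, Real.circleAverage_eq_integral_add (-Real.pi),
      smul_inv_smul₀ Real.two_pi_pos.ne',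
      intervalIntegral.integral_comp_add_right fun θ ↦ F (circleMap c r θ), zero_add,
      two_mul, add_neg_cancel_right, intervalIntegral.integral_of_le (by linarith [Real.pi_pos]),
      integral_Ioc_eq_integral_Ioo]
  calc ENNReal.ofReal (2 * Real.pi) * ‖F c‖ₑ
      = ‖∫ θ in Ioo (-Real.pi) Real.pi, F (circleMap c r θ)‖ₑ := by
        rw [hmean, enorm_smul, Real.enorm_of_nonneg Real.two_pi_pos.le]
    _ ≤ _ := enorm_integral_le_lintegral_enorm _

lemma enorm_center_le_setLIntegral_ball [CompleteSpace E] {F : ℂ → E} {c : ℂ} {R : ℝ}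
    (hR : 0 ≤ R) (hF : DifferentiableOn ℂ F (ball c R)) :
    ENNReal.ofReal (Real.pi * R ^ 2) * ‖F c‖ₑ ≤ ∫⁻ w in ball c R, ‖F w‖ₑ := by
  classical
  set f : ℂ → ℝ≥0∞ := (ball c R).piecewise (fun w ↦ ‖F w‖ₑ) 0
  have hmeas : Measurable f :=
    hF.continuousOn.enorm.measurable_piecewise continuousOn_const measurableSet_ball
  have hradial : ∫⁻ r in Ioo 0 R, ENNReal.ofReal r = ENNReal.ofReal (R ^ 2 / 2) := by
    have hint : IntegrableOn (fun r : ℝ ↦ r) (Ioo 0 R) :=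
      continuous_id.integrableOn_Icc.mono_set Ioo_subset_Icc_self
    rw [← ofReal_integral_eq_lintegral_ofReal hint
        ((ae_restrict_mem measurableSet_Ioo).mono fun r hr ↦ hr.1.le),
      ← integral_Ioc_eq_integral_Ioo, ← intervalIntegral.integral_of_le hR, integral_id]
    simp
  calc ENNReal.ofReal (Real.pi * R ^ 2) * ‖F c‖ₑ
      = ∫⁻ r in Ioo 0 R, ENNReal.ofReal r * (ENNReal.ofReal (2 * Real.pi) * ‖F c‖ₑ) := by
        rw [lintegral_mul_const _ ENNReal.measurable_ofReal, hradial, ← mul_assoc,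
          ← ENNReal.ofReal_mul (by positivity)]
        congr 2
        ring
    _ ≤ ∫⁻ r in Ioo 0 R, ENNReal.ofReal r *
          ∫⁻ θ in Ioo (-Real.pi) Real.pi, f (circleMap c r θ) := by
        refine setLIntegral_mono' measurableSet_Ioo fun r hr ↦ ?_
        have hcircle : ∀ θ, f (circleMap c r θ) = ‖F (circleMap c r θ)‖ₑ := fun θ ↦
          piecewise_eq_of_mem _ _ _ (by simpa [circleMap, abs_of_pos hr.1] using hr.2)
        simp only [hcircle]
        gcongr
        refine enorm_center_le_lintegral_circleMap (hF.diffContOnCl_ball ?_)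
        exact closedBall_subset_ball (by simpa [abs_of_pos hr.1] using hr.2)
    _ = ∫⁻ w in ball c R, f w := (setLIntegral_ball_eq_lintegral_circleMap hmeas c R).symm
    _ = ∫⁻ w in ball c R, ‖F w‖ₑ :=
        setLIntegral_congr_fun measurableSet_ball fun w hw ↦ piecewise_eq_of_mem _ _ _ hw

lemma norm_center_le_setIntegral_ball [CompleteSpace E] {F : ℂ → E} {c : ℂ} {R : ℝ}
    (hR : 0 ≤ R) (hF : DifferentiableOn ℂ F (ball c R)) (hint : IntegrableOn F (ball c R)) :
    Real.pi * R ^ 2 * ‖F c‖ ≤ ∫ w in ball c R, ‖F w‖ := by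
  rw [← ENNReal.ofReal_le_ofReal_iff (integral_nonneg fun w ↦ norm_nonneg _),
    ofReal_integral_norm_eq_lintegral_enorm hint, ENNReal.ofReal_mul (by positivity), ofReal_norm]
  exact enorm_center_le_setLIntegral_ball hR hF

lemma lintegral_enorm_deriv_sq_eq_volume_image {f : ℂ → ℂ} {s : Set ℂ} (hs : IsOpen s)
    (hf : DifferentiableOn ℂ f s) (hinj : InjOn f s) :
    ∫⁻ z in s, ‖deriv f z‖ₑ ^ 2 = volume (f '' s) := by
  rw [← lintegral_abs_det_fderiv_eq_addHaar_image volume hs.measurableSet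
    (fun z hz ↦ ((hf.differentiableAt (hs.mem_nhds hz)).hasDerivAt.hasFDerivAt.restrictScalars
      ℝ).hasFDerivWithinAt) hinj]
  refine lintegral_congr fun z ↦ ?_
  simp [ContinuousLinearMap.det, LinearMap.det_restrictScalars, Algebra.norm_complex_eq,
    Complex.normSq_eq_norm_sq, ENNReal.ofReal_pow]

lemma volume_reProdIm (s t : Set ℝ) : volume (s ×ℂ t) = volume s * volume t := by
  have hpre : s ×ℂ t = Complex.measurableEquivRealProd ⁻¹' (s ×ˢ t) := by
    ext; simp [mem_reProdIm]
  rw [hpre, Complex.volume_preserving_equiv_real_prod.measure_preimage_equiv,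
    Measure.volume_eq_prod, Measure.prod_prod]

end PlanarIntegrals

section MemDirichlet

variable {f φ u : ℂ → ℂ} {z : ℂ} {r : ℝ}

lemma isOpen_unitDisc : IsOpen unitDisc := isOpen_ball

lemma mem_unitDisc : z ∈ unitDisc ↔ ‖z‖ < 1 := mem_ball_zero_iff

lemma zero_mem_unitDisc : (0 : ℂ) ∈ unitDisc := mem_ball_self one_pos

lemma dirNormSq_nonneg (f : ℂ → ℂ) : 0 ≤ dirNormSq f := by
  unfold dirNormSq
  positivity

lemma norm_zero_le_sqrt_dirNormSq (f : ℂ → ℂ) : ‖f 0‖ ≤ √(dirNormSq f) := by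
  refine Real.le_sqrt_of_sq_le (le_add_of_nonneg_right ?_)
  positivity

lemma dirNormSq_const (c : ℂ) : dirNormSq (fun _ ↦ c) = ‖c‖ ^ 2 := by
  simp [dirNormSq]

lemma memDirichlet_const (c : ℂ) : MemDirichlet fun _ ↦ c :=
  ⟨differentiableOn_const c, by simp⟩

lemma memDirichlet_id : MemDirichlet fun z ↦ z := by
  refine ⟨differentiableOn_id, ?_⟩
  simp [unitDisc]

namespace MemDirichlet

lemma differentiableAt (hf : MemDirichlet f) (hz : z ∈ unitDisc) : DifferentiableAt ℂ f z :=
  hf.1.differentiableAt (isOpen_unitDisc.mem_nhds hz)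

lemma norm_deriv_le (hf : MemDirichlet f) (hr : r < 1) (hz : ‖z‖ ≤ r) :
    ‖deriv f z‖ ≤ (1 - r)⁻¹ * √(dirNormSq f) := by
  have hr' : 0 < 1 - r := sub_pos.2 hr
  have hball : ball z (1 - r) ⊆ unitDisc :=
    ball_subset_ball' (by rw [dist_zero_right]; linarith)
  have hint : IntegrableOn (fun w ↦ deriv f w ^ 2) unitDisc := by
    refine (integrable_norm_iff ((measurable_deriv f).pow_const 2).aestronglyMeasurable).1 ?_
    simp only [norm_pow]
    exact hf.2
  have harea : Real.pi * (1 - r) ^ 2 * ‖deriv f z‖ ^ 2 ≤ ∫ w in unitDisc, ‖deriv f w‖ ^ 2 := by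
    calc Real.pi * (1 - r) ^ 2 * ‖deriv f z‖ ^ 2
        = Real.pi * (1 - r) ^ 2 * ‖deriv f z ^ 2‖ := by rw [norm_pow]
      _ ≤ ∫ w in ball z (1 - r), ‖deriv f w ^ 2‖ :=
          norm_center_le_setIntegral_ball hr'.le
            (((hf.1.deriv isOpen_unitDisc).mono hball).pow 2) (hint.mono_set hball)
      _ ≤ ∫ w in unitDisc, ‖deriv f w ^ 2‖ :=
          setIntegral_mono_set hint.norm (Eventually.of_forall fun _ ↦ norm_nonneg _)
            hball.eventuallyLE
      _ = ∫ w in unitDisc, ‖deriv f w‖ ^ 2 := by simp only [norm_pow]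
  rw [le_inv_mul_iff₀ hr']
  refine Real.le_sqrt_of_sq_le ?_
  calc ((1 - r) * ‖deriv f z‖) ^ 2
      = 1 / Real.pi * (Real.pi * (1 - r) ^ 2 * ‖deriv f z‖ ^ 2) := by field_simp
    _ ≤ 1 / Real.pi * ∫ w in unitDisc, ‖deriv f w‖ ^ 2 := by gcongr
    _ ≤ dirNormSq f := le_add_of_nonneg_left (by positivity)

lemma norm_apply_le (hf : MemDirichlet f) (hr : r < 1) (hz : ‖z‖ ≤ r) :
    ‖f z‖ ≤ (1 - r)⁻¹ * √(dirNormSq f) := by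
  have hr0 : 0 ≤ r := (norm_nonneg z).trans hz
  have hr' : 0 < 1 - r := sub_pos.2 hr
  have hmvt : ‖f z - f 0‖ ≤ (1 - r)⁻¹ * √(dirNormSq f) * r := by
    refine ((convex_closedBall (0 : ℂ) r).norm_image_sub_le_of_norm_deriv_le
      (fun w hw ↦ hf.differentiableAt ?_) (fun w hw ↦ hf.norm_deriv_le hr ?_)
      (mem_closedBall_self hr0) (mem_closedBall_zero_iff.2 hz)).trans ?_
    · exact closedBall_subset_ball hr hw
    · exact mem_closedBall_zero_iff.1 hw
    · rw [sub_zero]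
      gcongr
  calc ‖f z‖ ≤ ‖f 0‖ + ‖f z - f 0‖ := norm_le_norm_add_norm_sub' _ _
    _ ≤ √(dirNormSq f) + (1 - r)⁻¹ * √(dirNormSq f) * r :=
        add_le_add (norm_zero_le_sqrt_dirNormSq f) hmvt
    _ = (1 - r)⁻¹ * √(dirNormSq f) := by field_simp; ring

end MemDirichlet

lemma memDirichlet_and_dirNormSq_le_of_norm_deriv_le {G : ℂ → ℝ} {a M : ℝ}
    (hf : DifferentiableOn ℂ f unitDisc) (hG : IntegrableOn (fun z ↦ G z ^ 2) unitDisc)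
    (h0 : ‖f 0‖ ≤ M * a) (hderiv : ∀ z ∈ unitDisc, ‖deriv f z‖ ≤ M * G z) :
    MemDirichlet f ∧
      dirNormSq f ≤ M ^ 2 * (a ^ 2 + 1 / Real.pi * ∫ z in unitDisc, G z ^ 2) := by
  have hsq : ∀ z ∈ unitDisc, ‖deriv f z‖ ^ 2 ≤ M ^ 2 * G z ^ 2 := fun z hz ↦ by
    rw [← mul_pow]
    gcongr
    exact hderiv z hz
  have hint : IntegrableOn (fun z ↦ ‖deriv f z‖ ^ 2) unitDisc := by
    refine (hG.const_mul (M ^ 2)).mono'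
      ((measurable_deriv f).norm.pow_const 2).aestronglyMeasurable ?_
    filter_upwards [ae_restrict_mem isOpen_unitDisc.measurableSet] with z hz
    simpa using hsq z hz
  refine ⟨⟨hf, hint⟩, ?_⟩
  calc dirNormSq f
      ≤ (M * a) ^ 2 + 1 / Real.pi * ∫ z in unitDisc, M ^ 2 * G z ^ 2 := by
        unfold dirNormSq
        gcongr ?_ ^ 2 + _ * ?_
        exact setIntegral_mono_on hint (hG.const_mul _) isOpen_unitDisc.measurableSet hsq
    _ = M ^ 2 * (a ^ 2 + 1 / Real.pi * ∫ z in unitDisc, G z ^ 2) := by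
        rw [integral_const_mul]
        ring

-- `u φ' = (φ u)' - φ u'` trades the derivative of `φ` for that of the product `φ u`.
lemma norm_deriv_mul_comp_le {M : ℝ} (hu : DifferentiableAt ℂ u z) (hφ : DifferentiableAt ℂ φ z)
    (hf : DifferentiableAt ℂ f (φ z)) (hφ1 : ‖φ z‖ ≤ 1) (hfM : ‖f (φ z)‖ ≤ M)
    (hfM' : ‖deriv f (φ z)‖ ≤ M) :
    ‖deriv (fun z ↦ u z * f (φ z)) z‖ ≤
      M * (2 * ‖deriv u z‖ + ‖deriv (fun z ↦ φ z * u z) z‖) := by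
  have hderiv : deriv (fun z ↦ u z * f (φ z)) z =
      deriv u z * f (φ z) + u z * (deriv f (φ z) * deriv φ z) :=
    (hu.hasDerivAt.mul (hf.hasDerivAt.comp z hφ.hasDerivAt)).deriv
  have hprod : deriv (fun z ↦ φ z * u z) z = deriv φ z * u z + φ z * deriv u z :=
    (hφ.hasDerivAt.mul hu.hasDerivAt).deriv
  have : 0 ≤ M := (norm_nonneg _).trans hfM
  calc ‖deriv (fun z ↦ u z * f (φ z)) z‖
      = ‖deriv u z * f (φ z) +
          (deriv (fun z ↦ φ z * u z) z - φ z * deriv u z) * deriv f (φ z)‖ := by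
        rw [hderiv, hprod]
        ring_nf
    _ ≤ ‖deriv u z‖ * ‖f (φ z)‖ +
          (‖deriv (fun z ↦ φ z * u z) z‖ + ‖φ z‖ * ‖deriv u z‖) * ‖deriv f (φ z)‖ := by
        refine (norm_add_le _ _).trans ?_
        rw [norm_mul, norm_mul, ← norm_mul (φ z)]
        gcongr
        exact norm_sub_le _ _
    _ ≤ ‖deriv u z‖ * M + (‖deriv (fun z ↦ φ z * u z) z‖ + 1 * ‖deriv u z‖) * M := by gcongr
    _ = M * (2 * ‖deriv u z‖ + ‖deriv (fun z ↦ φ z * u z) z‖) := by ring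

lemma MemDirichlet.memLp_deriv (hf : MemDirichlet f) :
    MemLp (deriv f) 2 (volume.restrict unitDisc) :=
  (memLp_two_iff_integrable_sq_norm (measurable_deriv f).aestronglyMeasurable).2 hf.2

lemma wcoBounded_of_norm_le (hφ : DifferentiableOn ℂ φ unitDisc) (hr : r < 1)
    (hφr : ∀ z ∈ unitDisc, ‖φ z‖ ≤ r) (hu : MemDirichlet u)
    (hφu : MemDirichlet fun z ↦ φ z * u z) : WCOBounded u φ := by
  have hmaps : MapsTo φ unitDisc unitDisc := fun z hz ↦ mem_unitDisc.2 ((hφr z hz).trans_lt hr)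
  set G : ℂ → ℝ := fun z ↦ 2 * ‖deriv u z‖ + ‖deriv (fun z ↦ φ z * u z) z‖
  have hG : IntegrableOn (fun z ↦ G z ^ 2) unitDisc :=
    ((hu.memLp_deriv.norm.const_mul 2).add hφu.memLp_deriv.norm).integrable_sq
  refine ⟨(1 - r)⁻¹ ^ 2 * (‖u 0‖ ^ 2 + 1 / Real.pi * ∫ z in unitDisc, G z ^ 2), by positivity,
    fun f hf ↦ ?_⟩
  set M : ℝ := (1 - r)⁻¹ * √(dirNormSq f)
  have hM2 : M ^ 2 = (1 - r)⁻¹ ^ 2 * dirNormSq f := by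
    rw [mul_pow, Real.sq_sqrt (dirNormSq_nonneg f)]
  rw [mul_right_comm, ← hM2]
  refine memDirichlet_and_dirNormSq_le_of_norm_deriv_le (hu.1.mul (hf.1.comp hφ hmaps)) hG ?_
    fun z hz ↦ ?_
  · rw [norm_mul, mul_comm]
    gcongr
    exact hf.norm_apply_le hr (hφr 0 zero_mem_unitDisc)
  · exact norm_deriv_mul_comp_le (hu.differentiableAt hz)
      (hφ.differentiableAt (isOpen_unitDisc.mem_nhds hz)) (hf.differentiableAt (hmaps hz))
      ((hφr z hz).trans hr.le) (hf.norm_apply_le hr (hφr z hz)) (hf.norm_deriv_le hr (hφr z hz))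

end MemDirichlet

section DirichletSpace

/-- The holomorphic functions of finite Dirichlet norm, as a space of functions on all of `ℂ` whose
values off the disc are arbitrary. -/
def dirichletSubmodule : Submodule ℂ (ℂ → ℂ) where
  carrier := {f | MemDirichlet f}
  zero_mem' := memDirichlet_const 0
  add_mem' {f g} hf hg := by
    refine ⟨hf.1.add hg.1, ?_⟩
    refine ((hf.memLp_deriv.add hg.memLp_deriv).integrable_norm_pow two_ne_zero).congr ?_
    filter_upwards [ae_restrict_mem isOpen_unitDisc.measurableSet] with z hz
    rw [Pi.add_apply, deriv_add (hf.differentiableAt hz) (hg.differentiableAt hz)]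
  smul_mem' c f hf := by
    refine ⟨hf.1.const_smul c, ?_⟩
    refine ((hf.memLp_deriv.const_smul c).integrable_norm_pow two_ne_zero).congr ?_
    filter_upwards [ae_restrict_mem isOpen_unitDisc.measurableSet] with z hz
    rw [Pi.smul_apply, deriv_const_smul c (hf.differentiableAt hz)]

/-- The Dirichlet space as a type carrying the Dirichlet norm. This is only a seminorm: functions
agreeing on the disc are at distance zero. -/
def DirichletSpace : Type := dirichletSubmodule

namespace DirichletSpace

instance : AddCommGroup DirichletSpace := inferInstanceAs (AddCommGroup dirichletSubmodule)

instance : Module ℂ DirichletSpace := inferInstanceAs (Module ℂ dirichletSubmodule)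

instance : CoeFun DirichletSpace fun _ ↦ ℂ → ℂ := ⟨Subtype.val⟩

lemma memDirichlet (f : DirichletSpace) : MemDirichlet f := f.2

lemma deriv_add_apply (f g : DirichletSpace) {z : ℂ} (hz : z ∈ unitDisc) :
    deriv ((f + g : DirichletSpace) : ℂ → ℂ) z = deriv f z + deriv g z :=
  deriv_add (f.memDirichlet.differentiableAt hz) (g.memDirichlet.differentiableAt hz)

lemma deriv_smul_apply (c : ℂ) (f : DirichletSpace) {z : ℂ} (hz : z ∈ unitDisc) :
    deriv ((c • f : DirichletSpace) : ℂ → ℂ) z = c • deriv f z :=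
  deriv_const_smul c (f.memDirichlet.differentiableAt hz)

/-- Normalized area measure on the unit disc. -/
def discArea : Measure ℂ := ENNReal.ofReal (1 / Real.pi) • volume.restrict unitDisc

lemma ae_mem_unitDisc : ∀ᵐ z ∂discArea, z ∈ unitDisc :=
  Measure.ae_smul_measure (ae_restrict_mem isOpen_unitDisc.measurableSet) _

lemma memLp_deriv (f : DirichletSpace) : MemLp (deriv f) 2 discArea :=
  f.memDirichlet.memLp_deriv.smul_measure ENNReal.ofReal_ne_top

/-- The embedding `f ↦ (f 0, f')` of the Dirichlet space into a Hilbert space, which induces the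
Dirichlet norm. -/
def embedding : DirichletSpace →ₗ[ℂ] WithLp 2 (ℂ × Lp ℂ 2 discArea) where
  toFun f := WithLp.toLp 2 (f 0, f.memLp_deriv.toLp)
  map_add' f g := by
    rw [← WithLp.toLp_add, Prod.mk_add_mk, ← MemLp.toLp_add]
    congr 2
    refine MemLp.toLp_congr _ _ ?_
    filter_upwards [ae_mem_unitDisc] with z hz using deriv_add_apply f g hz
  map_smul' c f := by
    rw [RingHom.id_apply, ← WithLp.toLp_smul, Prod.smul_mk, ← MemLp.toLp_const_smul]
    congr 2
    refine MemLp.toLp_congr _ _ ?_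
    filter_upwards [ae_mem_unitDisc] with z hz using deriv_smul_apply c f hz

instance : SeminormedAddCommGroup DirichletSpace := .induced _ _ embedding

instance : NormedSpace ℂ DirichletSpace := .induced ℂ _ _ embedding

lemma norm_sq_eq (f : DirichletSpace) : ‖f‖ ^ 2 = dirNormSq f := by
  have hLp : ‖f.memLp_deriv.toLp‖ ^ 2 = ∫ z, ‖deriv f z‖ ^ 2 ∂discArea := by
    have hmeas := f.memLp_deriv.aestronglyMeasurable
    rw [Lp.norm_toLp, toReal_eLpNorm hmeas,
      lpNorm_eq_integral_norm_rpow_toReal two_ne_zero ENNReal.ofNat_ne_top hmeas,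
      ← Real.rpow_natCast, ← Real.rpow_mul (by positivity)]
    simp
  calc ‖f‖ ^ 2 = ‖f 0‖ ^ 2 + ‖f.memLp_deriv.toLp‖ ^ 2 :=
        WithLp.prod_norm_sq_eq_of_L2 (embedding f)
    _ = dirNormSq f := by
        rw [hLp, discArea, integral_smul_measure, ENNReal.toReal_ofReal (by positivity)]
        rfl

lemma norm_eq_sqrt (f : DirichletSpace) : ‖f‖ = √(dirNormSq f) := by
  rw [← norm_sq_eq, Real.sqrt_sq (norm_nonneg f)]

lemma norm_apply_le (f : DirichletSpace) {z : ℂ} {r : ℝ} (hr : r < 1) (hz : ‖z‖ ≤ r) :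
    ‖f z‖ ≤ (1 - r)⁻¹ * ‖f‖ :=
  norm_eq_sqrt f ▸ f.memDirichlet.norm_apply_le hr hz

lemma uniformCauchySeqOn_closedBall {F : ℕ → DirichletSpace} (hF : CauchySeq F) {r : ℝ}
    (hr : r < 1) : UniformCauchySeqOn (fun n ↦ ⇑(F n)) atTop (closedBall 0 r) := by
  rw [Metric.uniformCauchySeqOn_iff]
  intro ε hε
  have hr' : 0 < 1 - r := sub_pos.2 hr
  obtain ⟨N, hN⟩ := Metric.cauchySeq_iff.1 hF ((1 - r) * ε) (by positivity)
  refine ⟨N, fun m hm n hn z hz ↦ ?_⟩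
  calc dist (F m z) (F n z) = ‖(F m - F n) z‖ := dist_eq_norm _ _
    _ ≤ (1 - r)⁻¹ * ‖F m - F n‖ := norm_apply_le _ hr (mem_closedBall_zero_iff.1 hz)
    _ < ε := by
      rw [inv_mul_lt_iff₀ hr', ← dist_eq_norm]
      exact hN m hm n hn

lemma exists_tendstoLocallyUniformlyOn {F : ℕ → DirichletSpace} (hF : CauchySeq F) :
    ∃ f : ℂ → ℂ, TendstoLocallyUniformlyOn (fun n ↦ ⇑(F n)) f atTop unitDisc := by
  have hpointwise : ∀ z, ∃ a, z ∈ unitDisc → Tendsto (fun n ↦ F n z) atTop (𝓝 a) := fun z ↦ by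
    by_cases hz : z ∈ unitDisc
    · have hcauchy := (uniformCauchySeqOn_closedBall hF (mem_unitDisc.1 hz)).cauchy_map
        (mem_closedBall_zero_iff.2 le_rfl)
      exact (cauchySeq_tendsto_of_complete hcauchy).imp fun _ ha _ ↦ ha
    · exact ⟨0, fun h ↦ absurd h hz⟩
  choose f hf using hpointwise
  refine ⟨f, (tendstoLocallyUniformlyOn_iff_forall_isCompact isOpen_unitDisc).2
    fun K hK hKc ↦ ?_⟩
  obtain ⟨r, hr, hKr⟩ := exists_lt_subset_ball hKc.isClosed hK
  exact ((uniformCauchySeqOn_closedBall hF hr).mono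
    (hKr.trans ball_subset_closedBall)).tendstoUniformlyOn_of_tendsto fun z hz ↦ hf z (hK hz)

lemma isometry_embedding : Isometry embedding :=
  AddMonoidHomClass.isometry_of_norm embedding fun _ ↦ rfl

lemma embedding_snd_ae_eq (f : DirichletSpace) : (embedding f).snd =ᵐ[discArea] deriv f :=
  f.memLp_deriv.coeFn_toLp

lemma ae_eq_deriv_of_tendsto_embedding {F : ℕ → DirichletSpace} {f : ℂ → ℂ}
    {p : WithLp 2 (ℂ × Lp ℂ 2 discArea)} (hp : Tendsto (fun n ↦ embedding (F n)) atTop (𝓝 p))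
    (hf : TendstoLocallyUniformlyOn (fun n ↦ ⇑(F n)) f atTop unitDisc) :
    p.snd =ᵐ[discArea] deriv f := by
  have hsnd : Tendsto (fun n ↦ (embedding (F n)).snd) atTop (𝓝 p.snd) :=
    ((WithLp.continuous_snd 2 _ _).tendsto p).comp hp
  obtain ⟨ns, hns, hae⟩ := (tendstoInMeasure_of_tendsto_Lp hsnd).exists_seq_tendsto_ae
  have hderiv := hf.deriv (Eventually.of_forall fun n ↦ (F n).memDirichlet.1) isOpen_unitDisc
  filter_upwards [hae, ae_mem_unitDisc, ae_all_iff.2 fun n ↦ embedding_snd_ae_eq (F n)]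
    with z hz hzD heq
  simp only [heq] at hz
  exact tendsto_nhds_unique hz ((hderiv.tendsto_at hzD).comp hns.tendsto_atTop)

lemma exists_embedding_eq {f : ℂ → ℂ} (hf : DifferentiableOn ℂ f unitDisc)
    {p : WithLp 2 (ℂ × Lp ℂ 2 discArea)} (h0 : p.fst = f 0) (hp : p.snd =ᵐ[discArea] deriv f) :
    ∃ g : DirichletSpace, embedding g = p := by
  have hmem : MemLp (deriv f) 2 discArea := (memLp_congr_ae hp).1 (Lp.memLp p.snd)
  have hint : IntegrableOn (fun z ↦ ‖deriv f z‖ ^ 2) unitDisc :=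
    (integrable_smul_measure (by simp [Real.pi_pos]) ENNReal.ofReal_ne_top).1
      (hmem.integrable_norm_pow two_ne_zero)
  let g : DirichletSpace := ⟨f, hf, hint⟩
  exact ⟨g, WithLp.ofLp_injective 2
    (Prod.ext h0.symm (Lp.ext ((embedding_snd_ae_eq g).trans hp.symm)))⟩

instance : CompleteSpace DirichletSpace := by
  refine Metric.complete_of_cauchySeq_tendsto fun F hF ↦ ?_
  obtain ⟨f, hf⟩ := exists_tendstoLocallyUniformlyOn hF
  obtain ⟨p, hp⟩ := cauchySeq_tendsto_of_complete
    (isometry_embedding.uniformContinuous.comp_cauchySeq hF)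
  have h0 : p.fst = f 0 := tendsto_nhds_unique
    (((WithLp.continuous_fst 2 _ _).tendsto p).comp hp) (hf.tendsto_at zero_mem_unitDisc)
  have hdiff : DifferentiableOn ℂ f unitDisc :=
    hf.differentiableOn (Eventually.of_forall fun n ↦ (F n).memDirichlet.1) isOpen_unitDisc
  obtain ⟨g, rfl⟩ := exists_embedding_eq hdiff h0 (ae_eq_deriv_of_tendsto_embedding hp hf)
  exact ⟨g, isometry_embedding.isUniformInducing.isInducing.tendsto_nhds_iff.2 hp⟩

end DirichletSpace

end DirichletSpace

section PointEvaluations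

namespace DirichletSpace

/-- Evaluation at a point of the disc, as a bounded functional on the Dirichlet space. -/
def eval (z : unitDisc) : DirichletSpace →L[ℂ] ℂ :=
  LinearMap.mkContinuous
    { toFun := fun f ↦ f z
      map_add' := fun _ _ ↦ rfl
      map_smul' := fun _ _ ↦ rfl }
    (1 - ‖(z : ℂ)‖)⁻¹ fun f ↦ f.norm_apply_le (mem_unitDisc.1 z.2) le_rfl

lemma eval_apply (z : unitDisc) (f : DirichletSpace) : eval z f = f z := rfl

lemma one_le_norm_eval (z : unitDisc) : 1 ≤ ‖eval z‖ := by
  let one : DirichletSpace := ⟨fun _ ↦ 1, memDirichlet_const 1⟩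
  have hone : ‖one‖ = 1 := by
    rw [norm_eq_sqrt]
    simp [one, dirNormSq_const]
  calc (1 : ℝ) = ‖eval z one‖ := by rw [eval_apply, norm_one]
    _ ≤ ‖eval z‖ * ‖one‖ := (eval z).le_opNorm one
    _ = ‖eval z‖ := by rw [hone, mul_one]

end DirichletSpace

open DirichletSpace

variable {φ u : ℂ → ℂ}

lemma WCOBounded.exists_norm_mul_norm_eval_le (h : WCOBounded u φ)
    (hφ : MapsTo φ unitDisc unitDisc) :
    ∃ C, ∀ z : unitDisc, ‖u z‖ * ‖eval (hφ.restrict φ _ _ z)‖ ≤ C * ‖eval z‖ := by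
  obtain ⟨C, -, hC⟩ := h
  refine ⟨√C, fun z ↦ ?_⟩
  rw [← norm_smul]
  refine ContinuousLinearMap.opNorm_le_bound _ (by positivity) fun f ↦ ?_
  let g : DirichletSpace := ⟨fun z ↦ u z * f (φ z), (hC f f.memDirichlet).1⟩
  have hg : ‖g‖ ≤ √C * ‖f‖ := by
    rw [norm_eq_sqrt, norm_eq_sqrt, ← Real.sqrt_mul' _ (dirNormSq_nonneg f)]
    exact Real.sqrt_le_sqrt (hC f f.memDirichlet).2
  calc ‖(u z • eval (hφ.restrict φ _ _ z)) f‖ = ‖eval z g‖ := rfl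
    _ ≤ ‖eval z‖ * (√C * ‖f‖) := (eval z).le_opNorm_of_le hg
    _ = √C * ‖eval z‖ * ‖f‖ := by ring

lemma exists_norm_eval_le_of_forall_wcoBounded (hφ : MapsTo φ unitDisc unitDisc)
    (h : ∀ u, MemDirichlet u → WCOBounded u φ) :
    ∃ C, ∀ z : unitDisc, ‖eval (hφ.restrict φ _ _ z)‖ ≤ C := by
  have hpos : ∀ z, 0 < ‖eval z‖ := fun z ↦ one_pos.trans_le (one_le_norm_eval z)
  set a : unitDisc → ℝ := fun z ↦ ‖eval (hφ.restrict φ _ _ z)‖ / ‖eval z‖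
  have hnorm : ∀ z, ‖(a z : ℂ) • eval z‖ = ‖eval (hφ.restrict φ _ _ z)‖ := fun z ↦ by
    rw [norm_smul, Complex.norm_real, Real.norm_of_nonneg (by positivity),
      div_mul_cancel₀ _ (hpos z).ne']
  have hbdd : ∀ u : DirichletSpace, ∃ C, ∀ z, ‖((a z : ℂ) • eval z) u‖ ≤ C := fun u ↦ by
    obtain ⟨C, hC⟩ := (h u u.memDirichlet).exists_norm_mul_norm_eval_le hφ
    refine ⟨C, fun z ↦ ?_⟩
    calc ‖((a z : ℂ) • eval z) u‖ = ‖u z‖ * ‖eval (hφ.restrict φ _ _ z)‖ / ‖eval z‖ := by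
          rw [smul_apply, eval_apply, norm_smul, Complex.norm_real,
            Real.norm_of_nonneg (by positivity)]
          ring
      _ ≤ C := (div_le_iff₀ (hpos z)).2 (hC z)
  obtain ⟨C, hC⟩ := banach_steinhaus hbdd
  exact ⟨C, fun z ↦ hnorm z ▸ hC z⟩

end PointEvaluations

section LogarithmicTestFunctions

variable {f : ℂ → ℂ} {w z : ℂ}

lemma memDirichlet_of_injOn (hf : DifferentiableOn ℂ f unitDisc) (hinj : InjOn f unitDisc)
    (hvol : volume (f '' unitDisc) ≠ ∞) : MemDirichlet f := by
  refine ⟨hf, ((measurable_deriv f).norm.pow_const 2).aestronglyMeasurable, ?_⟩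
  rw [← lintegral_enorm_deriv_sq_eq_volume_image isOpen_unitDisc hf hinj] at hvol
  simpa [HasFiniteIntegral, lt_top_iff_ne_top] using hvol

lemma dirNormSq_of_injOn (hf : DifferentiableOn ℂ f unitDisc) (hinj : InjOn f unitDisc) :
    dirNormSq f = ‖f 0‖ ^ 2 + 1 / Real.pi * volume.real (f '' unitDisc) := by
  rw [dirNormSq, integral_eq_lintegral_of_nonneg_ae (Eventually.of_forall fun _ ↦ by positivity)
    ((measurable_deriv f).norm.pow_const 2).aestronglyMeasurable, measureReal_def,
    ← lintegral_enorm_deriv_sq_eq_volume_image isOpen_unitDisc hf hinj]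
  simp [ENNReal.ofReal_pow]

/-- The function `1 - K_w`, where `K_w` is the reproducing kernel of the Dirichlet space at `w`; it
is large at `w` in comparison with its norm. -/
def logKernel (w z : ℂ) : ℂ := log (1 - conj w * z)

lemma logKernel_zero_right (w : ℂ) : logKernel w 0 = 0 := by simp [logKernel]

lemma norm_conj_mul_le (hz : z ∈ unitDisc) : ‖conj w * z‖ ≤ ‖w‖ := by
  rw [norm_mul, norm_conj]
  exact mul_le_of_le_one_right (norm_nonneg w) (mem_unitDisc.1 hz).le

lemma one_sub_norm_le_re (hz : z ∈ unitDisc) : 1 - ‖w‖ ≤ (1 - conj w * z).re := by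
  rw [sub_re, one_re]
  linarith [re_le_norm (conj w * z), norm_conj_mul_le (w := w) hz]

lemma one_sub_conj_mul_mem_slitPlane (hw : w ∈ unitDisc) (hz : z ∈ unitDisc) :
    1 - conj w * z ∈ slitPlane :=
  Or.inl (by linarith [one_sub_norm_le_re (w := w) hz, mem_unitDisc.1 hw])

lemma differentiableOn_logKernel (hw : w ∈ unitDisc) :
    DifferentiableOn ℂ (logKernel w) unitDisc := fun _ hz ↦
  (((differentiableAt_id.const_mul (conj w)).const_sub 1).clog
    (one_sub_conj_mul_mem_slitPlane hw hz)).differentiableWithinAt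

lemma injOn_logKernel (hw : w ∈ unitDisc) (hw0 : w ≠ 0) : InjOn (logKernel w) unitDisc := by
  intro z hz z' hz' h
  have hexp : 1 - conj w * z = 1 - conj w * z' := by
    rw [← exp_log (slitPlane_ne_zero (one_sub_conj_mul_mem_slitPlane hw hz)),
      ← exp_log (slitPlane_ne_zero (one_sub_conj_mul_mem_slitPlane hw hz'))]
    exact congrArg exp h
  exact mul_left_cancel₀ ((map_ne_zero _).2 hw0) (sub_right_injective hexp)

lemma image_logKernel_subset (hw : w ∈ unitDisc) :
    logKernel w '' unitDisc ⊆ Icc (Real.log (1 - ‖w‖)) (Real.log 2) ×ℂ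
      Icc (-(Real.pi / 2)) (Real.pi / 2) := by
  rintro _ ⟨z, hz, rfl⟩
  have hw1 : 0 < 1 - ‖w‖ := sub_pos.2 (mem_unitDisc.1 hw)
  have hre := one_sub_norm_le_re (w := w) hz
  have hlower : 1 - ‖w‖ ≤ ‖1 - conj w * z‖ := hre.trans (re_le_norm _)
  have hupper : ‖1 - conj w * z‖ ≤ 2 := by
    linarith [norm_sub_le 1 (conj w * z), norm_conj_mul_le (w := w) hz, norm_one (α := ℂ)]
  refine mem_reProdIm.2 ⟨?_, ?_⟩
  · rw [logKernel, log_re]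
    exact ⟨Real.log_le_log hw1 hlower, Real.log_le_log (hw1.trans_le hlower) hupper⟩
  · rw [logKernel, log_im]
    exact abs_le.1 (abs_arg_le_pi_div_two_iff.2 (hw1.le.trans hre))

lemma volume_image_logKernel_le (hw : w ∈ unitDisc) :
    volume (logKernel w '' unitDisc) ≤
      ENNReal.ofReal (Real.pi * (Real.log 2 - Real.log (1 - ‖w‖))) := by
  refine (measure_mono (image_logKernel_subset hw)).trans_eq ?_
  rw [volume_reProdIm, Real.volume_Icc, Real.volume_Icc, mul_comm,
    ← ENNReal.ofReal_mul (by linarith [Real.pi_pos])]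
  ring_nf

lemma memDirichlet_logKernel (hw : w ∈ unitDisc) (hw0 : w ≠ 0) : MemDirichlet (logKernel w) :=
  memDirichlet_of_injOn (differentiableOn_logKernel hw) (injOn_logKernel hw hw0)
    ((volume_image_logKernel_le hw).trans_lt ENNReal.ofReal_lt_top).ne

lemma dirNormSq_logKernel_le (hw : w ∈ unitDisc) (hw0 : w ≠ 0) :
    dirNormSq (logKernel w) ≤ Real.log 2 - Real.log (1 - ‖w‖) := by
  have hlog : Real.log (1 - ‖w‖) ≤ 0 :=
    Real.log_nonpos (sub_nonneg.2 (mem_unitDisc.1 hw).le) (sub_le_self _ (norm_nonneg w))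
  have hnonneg : 0 ≤ Real.log 2 - Real.log (1 - ‖w‖) := by
    linarith [Real.log_nonneg one_le_two]
  rw [dirNormSq_of_injOn (differentiableOn_logKernel hw) (injOn_logKernel hw hw0),
    logKernel_zero_right, norm_zero, zero_pow two_ne_zero, zero_add, one_div,
    inv_mul_le_iff₀ Real.pi_pos]
  exact ENNReal.toReal_le_of_le_ofReal (by positivity) (volume_image_logKernel_le hw)

lemma neg_log_sub_log_two_le_norm_logKernel_self (hw : w ∈ unitDisc) :
    -Real.log (1 - ‖w‖) - Real.log 2 ≤ ‖logKernel w w‖ := by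
  have hw1 := mem_unitDisc.1 hw
  have hfactor : ‖1 - conj w * w‖ = (1 - ‖w‖) * (1 + ‖w‖) := by
    rw [conj_mul', ← ofReal_pow, ← ofReal_one, ← ofReal_sub, Complex.norm_real,
      Real.norm_of_nonneg (by nlinarith [norm_nonneg w])]
    ring
  have hlog : Real.log ‖1 - conj w * w‖ ≤ Real.log (1 - ‖w‖) + Real.log 2 := by
    rw [hfactor, Real.log_mul (by linarith) (by positivity)]
    gcongr
    linarith
  calc -Real.log (1 - ‖w‖) - Real.log 2 ≤ -(logKernel w w).re := by
        rw [logKernel, log_re]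
        linarith
    _ ≤ ‖logKernel w w‖ := (neg_le_abs _).trans (abs_re_le_norm _)

lemma neg_log_sub_log_two_le_norm_eval_mul (w : unitDisc) (hw0 : (w : ℂ) ≠ 0) :
    -Real.log (1 - ‖(w : ℂ)‖) - Real.log 2 ≤
      ‖DirichletSpace.eval w‖ * √(Real.log 2 - Real.log (1 - ‖(w : ℂ)‖)) := by
  let k : DirichletSpace := ⟨logKernel w, memDirichlet_logKernel w.2 hw0⟩
  calc -Real.log (1 - ‖(w : ℂ)‖) - Real.log 2
      ≤ ‖DirichletSpace.eval w k‖ := neg_log_sub_log_two_le_norm_logKernel_self w.2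
    _ ≤ ‖DirichletSpace.eval w‖ * ‖k‖ := (DirichletSpace.eval w).le_opNorm k
    _ ≤ ‖DirichletSpace.eval w‖ * √(Real.log 2 - Real.log (1 - ‖(w : ℂ)‖)) := by
      rw [k.norm_eq_sqrt]
      gcongr
      exact dirNormSq_logKernel_le w.2 hw0

lemma exists_norm_le_of_norm_eval_le (C : ℝ) :
    ∃ r < 1, ∀ w : unitDisc, ‖DirichletSpace.eval w‖ ≤ C → ‖(w : ℂ)‖ ≤ r := by
  have hlog2 : 0 < Real.log 2 := Real.log_pos one_lt_two
  set T : ℝ := C ^ 2 + 3 * Real.log 2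
  refine ⟨1 - Real.exp (-T), sub_lt_self _ (Real.exp_pos _), fun w hw ↦ ?_⟩
  by_contra! hlt
  have hw0 : (w : ℂ) ≠ 0 := norm_pos_iff.1 <| hlt.trans_le' <|
    sub_nonneg.2 (Real.exp_le_one_iff.2 (neg_nonpos.2 (by positivity)))
  set s : ℝ := -Real.log (1 - ‖(w : ℂ)‖) - Real.log 2 with hs
  have hlarge : C ^ 2 + 2 * Real.log 2 < s := by
    have := (Real.log_lt_iff_lt_exp (sub_pos.2 (mem_unitDisc.1 w.2))).2 (sub_lt_comm.1 hlt)
    linarith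
  have hquad : s ^ 2 ≤ C ^ 2 * (s + 2 * Real.log 2) := by
    calc s ^ 2 ≤ (C * √(s + 2 * Real.log 2)) ^ 2 := by
          refine pow_le_pow_left₀ (by nlinarith) ?_ 2
          have := neg_log_sub_log_two_le_norm_eval_mul w hw0
          rw [show s + 2 * Real.log 2 = Real.log 2 - Real.log (1 - ‖(w : ℂ)‖) by rw [hs]; ring]
          exact this.trans (by gcongr)
      _ = C ^ 2 * (s + 2 * Real.log 2) := by
          rw [mul_pow, Real.sq_sqrt (by nlinarith)]
  nlinarith

end LogarithmicTestFunctions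

/-- For a holomorphic self-map `φ` of `𝔻`, one has `ℳ(φ) = 𝒟`, i.e. `W_{u,φ}`
is bounded on `𝒟` for every `u ∈ 𝒟`, if and only if `sup_{z∈𝔻}|φ(z)| < 1`
and `φ` is a multiplier of `𝒟`. -/
theorem multSpace_eq_dirichlet_iff (φ : ℂ → ℂ)
    (hd : DifferentiableOn ℂ φ unitDisc)
    (hm : Set.MapsTo φ unitDisc unitDisc) :
    (∀ u : ℂ → ℂ, MemDirichlet u → WCOBounded u φ) ↔
      ((∃ r : ℝ, r < 1 ∧ ∀ z ∈ unitDisc, ‖φ z‖ ≤ r) ∧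
        ∀ f : ℂ → ℂ, MemDirichlet f → MemDirichlet fun z => φ z * f z) := by
  constructor
  · intro hbdd
    obtain ⟨C, hC⟩ := exists_norm_eval_le_of_forall_wcoBounded hm hbdd
    obtain ⟨r, hr, hle⟩ := exists_norm_le_of_norm_eval_le C
    refine ⟨⟨r, hr, fun z hz ↦ hle _ (hC ⟨z, hz⟩)⟩, fun f hf ↦ ?_⟩
    obtain ⟨_, -, hmem⟩ := hbdd f hf
    simpa only [mul_comm] using (hmem _ memDirichlet_id).1
  · rintro ⟨⟨r, hr, hφr⟩, hmul⟩ u hu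
    exact wcoBounded_of_norm_le hd hr hφr hu (hmul u hu)
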